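/- (Hölder inequality for mixed-norm Herz spaces.) Let n ∈ ℕ, p⃗, q⃗ ∈ [1,∞]^n and α⃗ ∈ ℝⁿ. Then for all measurable f, g : ℝⁿ → ℂ, ∫_{ℝⁿ} |f(x) g(x)| dx ≤ ‖f‖_{Ė^{α⃗,p⃗}_{q⃗}(ℝⁿ)} ‖g‖_{Ė^{-α⃗,p⃗'}_{q⃗'}(ℝⁿ)}. -/

import Mathlib

open MeasureTheory ENNReal Filter

noncomputable section

/-- The dyadic annulus `R_k = (-2^k, 2^k) \ (-2^(k-1), 2^(k-1))` in `ℝ`. -/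
def herzRing (k : ℤ) : Set ℝ :=
  Set.Ioo (-(2 : ℝ) ^ k) ((2 : ℝ) ^ k) \ Set.Ioo (-(2 : ℝ) ^ (k - 1)) ((2 : ℝ) ^ (k - 1))

/-- The `L^q` "norm" (valued in `ℝ≥0∞`) of an `ℝ≥0∞`-valued function on a set `s ⊆ ℝ`,
with the usual modification when `q = ∞`. -/
def lqNormOn (q : ℝ≥0∞) (s : Set ℝ) (g : ℝ → ℝ≥0∞) : ℝ≥0∞ :=
  if q = ∞ then essSup (s.indicator g) volume
  else (∫⁻ x in s, g x ^ q.toReal) ^ (1 / q.toReal)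

/-- The `l^p` norm over `ℤ` of an `ℝ≥0∞`-valued sequence, with the usual modification
when `p = ∞`. -/
def lpZNorm (p : ℝ≥0∞) (a : ℤ → ℝ≥0∞) : ℝ≥0∞ :=
  if p = ∞ then ⨆ k, a k
  else (∑' k : ℤ, a k ^ p.toReal) ^ (1 / p.toReal)

/-- The one-dimensional Herz norm `K^{α,p}_q` of an `ℝ≥0∞`-valued function on `ℝ`. -/
def herzNorm1 (α : ℝ) (p q : ℝ≥0∞) (g : ℝ → ℝ≥0∞) : ℝ≥0∞ :=
  lpZNorm p fun k => ENNReal.ofReal ((2 : ℝ) ^ ((k : ℝ) * α)) * lqNormOn q (herzRing k) g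

/-- The mixed-norm Herz norm on `ℝⁿ` of an `ℝ≥0∞`-valued function: the Herz norm
`K^{α_1,p_1}_{q_1}` is applied in the first variable, then `K^{α_2,p_2}_{q_2}` in the
second variable, …, and finally `K^{α_n,p_n}_{q_n}` in the last variable. -/
def mixedHerzNormE : (n : ℕ) → (Fin n → ℝ) → (Fin n → ℝ≥0∞) → (Fin n → ℝ≥0∞) →
    ((Fin n → ℝ) → ℝ≥0∞) → ℝ≥0∞
  | 0, _, _, _, f => f fun i => i.elim0
  | n + 1, α, p, q, f =>
    herzNorm1 (α (Fin.last n)) (p (Fin.last n)) (q (Fin.last n)) fun xlast =>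
      mixedHerzNormE n (Fin.init α) (Fin.init p) (Fin.init q) fun y => f (Fin.snoc y xlast)

/-- The mixed-norm Herz norm `‖f‖_{Ė^{α,p}_q(ℝⁿ)}` of a complex-valued function on `ℝⁿ`. -/
def herzNormC (n : ℕ) (α : Fin n → ℝ) (p q : Fin n → ℝ≥0∞) (f : (Fin n → ℝ) → ℂ) : ℝ≥0∞ :=
  mixedHerzNormE n α p q fun x => (‖f x‖₊ : ℝ≥0∞)

/-- `I_m = (-2^m, -2^{-m}] ∪ [2^{-m}, 2^m)`. -/
def herzI (m : ℕ) : Set ℝ :=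
  Set.Ioc (-(2 : ℝ) ^ (m : ℤ)) (-(2 : ℝ) ^ (-(m : ℤ))) ∪
    Set.Ico ((2 : ℝ) ^ (-(m : ℤ))) ((2 : ℝ) ^ (m : ℤ))

/-- `A_m = I_m^n ⊆ ℝⁿ`. -/
def herzA (n m : ℕ) : Set (Fin n → ℝ) := Set.univ.pi fun _ => herzI m

/-- The class `H(ℝⁿ)` of simple functions built from finitely many pairwise disjoint
parallelepipeds contained in some `A_m`. -/
def IsHSimple (n : ℕ) (f : (Fin n → ℝ) → ℂ) : Prop :=
  ∃ (m N : ℕ) (a : Fin N → ℂ) (E : Fin N → Fin n → Set ℝ),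
    (∀ k i, MeasurableSet (E k i)) ∧
    (∀ k, Set.univ.pi (E k) ⊆ herzA n m) ∧
    (Pairwise fun k l => Disjoint (Set.univ.pi (E k)) (Set.univ.pi (E l))) ∧
    f = fun x => ∑ k, (Set.univ.pi (E k)).indicator (fun _ => a k) x

/-- The Euclidean ball `B(x,r)` in `ℝⁿ`. -/
def eucBall (n : ℕ) (x : Fin n → ℝ) (r : ℝ) : Set (Fin n → ℝ) :=
  {y | ∑ i, (y i - x i) ^ 2 < r ^ 2}

/-- The (uncentered) maximal operator in the `k`-th variable. -/
def maxVar (n : ℕ) (k : Fin n) (g : (Fin n → ℝ) → ℝ≥0∞) : (Fin n → ℝ) → ℝ≥0∞ :=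
  fun x => ⨆ (a : ℝ) (b : ℝ) (_ : x k ∈ Set.Ioo a b),
    (volume (Set.Ioo a b))⁻¹ * ∫⁻ y in Set.Ioo a b, g (Function.update x k y)

/-- The centered Hardy–Littlewood maximal operator on `ℝⁿ`. -/
def centeredMax (n : ℕ) (g : (Fin n → ℝ) → ℝ≥0∞) : (Fin n → ℝ) → ℝ≥0∞ :=
  fun x => ⨆ (r : ℝ) (_ : 0 < r),
    (volume (eucBall n x r))⁻¹ * ∫⁻ y in eucBall n x r, g y

/-- The composition `M_n ∘ ⋯ ∘ M_1` of the maximal operators in each variable. -/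
def iteratedMax (n : ℕ) (g : (Fin n → ℝ) → ℝ≥0∞) : (Fin n → ℝ) → ℝ≥0∞ :=
  (List.ofFn fun k : Fin n => maxVar n k).foldl (fun h F => F h) g

/-- The iterated maximal operator `ℳ_t(f) = [M_n ⋯ M_1(|f|^t)]^{1/t}`. -/
def iterMaxPow (n : ℕ) (t : ℝ) (f : (Fin n → ℝ) → ℂ) : (Fin n → ℝ) → ℝ≥0∞ :=
  fun x => iteratedMax n (fun y => (‖f y‖₊ : ℝ≥0∞) ^ t) x ^ (1 / t)

/-- The `l^r`-Herz type mixed norm of a sequence of functions on `ℝⁿ`. -/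
def herzSeqNorm (n : ℕ) (r : ℝ≥0∞) (α : Fin n → ℝ) (p q : Fin n → ℝ≥0∞)
    (F : ℤ → (Fin n → ℝ) → ℂ) : ℝ≥0∞ :=
  mixedHerzNormE n α p q fun x => lpZNorm r fun j => (‖F j x‖₊ : ℝ≥0∞)

/-- `N` is a ball quasi-Banach function norm on (nonnegative extended-real-valued)
measurable functions on `ℝⁿ`. -/
def IsBQBFNorm (n : ℕ) (N : ((Fin n → ℝ) → ℝ≥0∞) → ℝ≥0∞) : Prop :=
  (∀ f : (Fin n → ℝ) → ℝ≥0∞, Measurable f → N f = 0 → f =ᵐ[volume] 0) ∧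
  (∀ f g : (Fin n → ℝ) → ℝ≥0∞, Measurable f → Measurable g →
    (∀ᵐ x ∂volume, g x ≤ f x) → N g ≤ N f) ∧
  (∀ (fm : ℕ → (Fin n → ℝ) → ℝ≥0∞) (f : (Fin n → ℝ) → ℝ≥0∞),
    (∀ m, Measurable (fm m)) → Measurable f →
    (∀ᵐ x ∂volume, Monotone (fun m => fm m x) ∧
      Tendsto (fun m => fm m x) atTop (nhds (f x))) →
    Monotone (fun m => N (fm m)) ∧ Tendsto (fun m => N (fm m)) atTop (nhds (N f))) ∧
  (∀ (x : Fin n → ℝ) (r : ℝ), 0 < r →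
    N ((eucBall n x r).indicator fun _ => (1 : ℝ≥0∞)) ≠ ∞)

/-- `N` is a ball Banach function norm: a ball quasi-Banach function norm that moreover
satisfies the triangle inequality and locally dominates the `L¹` norm. -/
def IsBallBanachNorm (n : ℕ) (N : ((Fin n → ℝ) → ℝ≥0∞) → ℝ≥0∞) : Prop :=
  IsBQBFNorm n N ∧
  (∀ f g : (Fin n → ℝ) → ℝ≥0∞, Measurable f → Measurable g → N (f + g) ≤ N f + N g) ∧
  (∀ (x : Fin n → ℝ) (r : ℝ), 0 < r → ∃ C : ℝ≥0∞, 0 < C ∧ C ≠ ∞ ∧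
    ∀ f : (Fin n → ℝ) → ℝ≥0∞, Measurable f → (∫⁻ y in eucBall n x r, f y) ≤ C * N f)

/-- The associate (Köthe dual) norm of a function norm `N`. -/
def assocNormOf (n : ℕ) (N : ((Fin n → ℝ) → ℝ≥0∞) → ℝ≥0∞)
    (f : (Fin n → ℝ) → ℝ≥0∞) : ℝ≥0∞ :=
  ⨆ (g : (Fin n → ℝ) → ℝ≥0∞) (_ : Measurable g) (_ : N g = 1), ∫⁻ x, f x * g x

/-- The `θ`-convexification of a function norm: `‖f‖_{X^θ} = ‖|f|^θ‖_X^{1/θ}`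
(here stated with `θ` in place of `1/p`, so `X^{1/p}` is `convexPow n (1/p) N`). -/
def convexPow (n : ℕ) (θ : ℝ) (N : ((Fin n → ℝ) → ℝ≥0∞) → ℝ≥0∞)
    (f : (Fin n → ℝ) → ℝ≥0∞) : ℝ≥0∞ :=
  N (fun x => f x ^ θ) ^ (1 / θ)

/-- The associate space norm of the mixed-norm Herz space, for complex-valued functions. -/
def herzAssocNormC (n : ℕ) (α : Fin n → ℝ) (p q : Fin n → ℝ≥0∞)
    (f : (Fin n → ℝ) → ℂ) : ℝ≥0∞ :=
  ⨆ (g : (Fin n → ℝ) → ℂ) (_ : Measurable g) (_ : herzNormC n α p q g = 1),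
    ∫⁻ x, (‖f x * g x‖₊ : ℝ≥0∞)

/-!
On each dyadic ring `R_k` the factors `2^{kα}` and `2^{-kα}` cancel, so Hölder's inequality in
`L^q(R_k)` followed by Hölder's inequality in `ℓ^p(ℤ)` gives the one-dimensional case. The general
case is Tonelli's theorem in the last variable: the induction hypothesis bounds the inner integral
by a product of two partial mixed norms, to which the one-dimensional inequality applies. The latter
needs the partial mixed norms to be measurable in the remaining variable; for `q = ∞` this rests on
the measurability of an essential supremum in a parameter.
-/

section EssSup

variable {X Y β : Type*} [MeasurableSpace X] [MeasurableSpace Y] [CompleteLinearOrder β]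
  [TopologicalSpace β] [OrderTopology β]

lemma essSup_le_iff_ae_le [FirstCountableTopology β] {μ : Measure Y} {f : Y → β} {c : β} :
    essSup f μ ≤ c ↔ ∀ᵐ y ∂μ, f y ≤ c :=
  ⟨fun h => (_root_.ae_le_essSup).mono fun _ hy => hy.trans h, essSup_le_of_ae_le c⟩

lemma measurable_essSup_right [SecondCountableTopology β] [MeasurableSpace β] [BorelSpace β]
    (μ : Measure Y) [SFinite μ] {F : X → Y → β} (hF : Measurable (Function.uncurry F)) :
    Measurable fun x => essSup (F x) μ := by
  refine measurable_of_Iic fun c => ?_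
  have sublevel_eq : (fun x => essSup (F x) μ) ⁻¹' Set.Iic c =
      {x | μ (Prod.mk x ⁻¹' (Function.uncurry F ⁻¹' Set.Ioi c)) = 0} := by
    ext x
    simp [essSup_le_iff_ae_le, ae_iff, Set.preimage, Function.uncurry]
  rw [sublevel_eq]
  exact measurable_measure_prodMk_left (hF measurableSet_Ioi) (measurableSet_singleton 0)

end EssSup

section Holder

lemma lintegral_mul_le_eLpNorm_top_mul_eLpNorm_one {X : Type*} [MeasurableSpace X] {μ : Measure X}
    (f : X → ℝ≥0∞) {g : X → ℝ≥0∞} (hg : AEMeasurable g μ) :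
    ∫⁻ x, f x * g x ∂μ ≤ eLpNorm f ∞ μ * eLpNorm g 1 μ := by
  simp only [eLpNorm_exponent_top, eLpNorm_one_eq_lintegral_enorm, enorm_eq_self]
  rw [← lintegral_const_mul'' _ hg]
  refine lintegral_mono_ae ?_
  filter_upwards [enorm_ae_le_eLpNormEssSup f μ] with x hx
  gcongr
  exact hx

lemma lintegral_mul_le_eLpNorm_mul_eLpNorm {X : Type*} [MeasurableSpace X] {μ : Measure X}
    (p q : ℝ≥0∞) [hpq : HolderConjugate p q] {f g : X → ℝ≥0∞}
    (hf : AEMeasurable f μ) (hg : AEMeasurable g μ) :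
    ∫⁻ x, f x * g x ∂μ ≤ eLpNorm f p μ * eLpNorm g q μ := by
  rcases eq_or_ne p ∞ with rfl | hp
  · obtain rfl : q = 1 := (HolderConjugate.eq_top_iff_eq_one ∞ q).1 rfl
    exact lintegral_mul_le_eLpNorm_top_mul_eLpNorm_one f hg
  rcases eq_or_ne q ∞ with rfl | hq
  · obtain rfl : p = 1 := (HolderConjugate.eq_top_iff_eq_one ∞ p).1 rfl
    simpa only [mul_comm] using lintegral_mul_le_eLpNorm_top_mul_eLpNorm_one g hf
  · rw [eLpNorm_eq_lintegral_rpow_enorm_toReal (HolderConjugate.ne_zero p q) hp,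
      eLpNorm_eq_lintegral_rpow_enorm_toReal (HolderConjugate.ne_zero q p) hq]
    exact ENNReal.lintegral_mul_le_Lp_mul_Lq μ (HolderConjugate.toReal_of_ne_top hp hq) hf hg

lemma lqNormOn_eq_eLpNorm_restrict {q : ℝ≥0∞} (hq : q ≠ 0) {s : Set ℝ} (hs : MeasurableSet s)
    (g : ℝ → ℝ≥0∞) : lqNormOn q s g = eLpNorm g q (volume.restrict s) := by
  simp only [lqNormOn, eLpNorm, hq, if_false, essSup_indicator_eq_essSup_restrict hs,
    eLpNormEssSup, eLpNorm', enorm_eq_self]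

lemma lpZNorm_eq_eLpNorm_count {p : ℝ≥0∞} (hp : p ≠ 0) (a : ℤ → ℝ≥0∞) :
    lpZNorm p a = eLpNorm a p Measure.count := by
  simp only [lpZNorm, eLpNorm, hp, if_false, eLpNormEssSup_count, eLpNorm', lintegral_count,
    enorm_eq_self]

lemma lintegral_mul_le_lqNormOn_mul_lqNormOn (q q' : ℝ≥0∞) [HolderConjugate q q'] {s : Set ℝ}
    (hs : MeasurableSet s) {f g : ℝ → ℝ≥0∞} (hf : AEMeasurable f (volume.restrict s))
    (hg : AEMeasurable g (volume.restrict s)) :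
    ∫⁻ x in s, f x * g x ≤ lqNormOn q s f * lqNormOn q' s g := by
  rw [lqNormOn_eq_eLpNorm_restrict (HolderConjugate.ne_zero q q') hs,
    lqNormOn_eq_eLpNorm_restrict (HolderConjugate.ne_zero q' q) hs]
  exact lintegral_mul_le_eLpNorm_mul_eLpNorm q q' hf hg

lemma tsum_mul_le_lpZNorm_mul_lpZNorm (p p' : ℝ≥0∞) [HolderConjugate p p'] (a b : ℤ → ℝ≥0∞) :
    ∑' k, a k * b k ≤ lpZNorm p a * lpZNorm p' b := by
  rw [lpZNorm_eq_eLpNorm_count (HolderConjugate.ne_zero p p'),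
    lpZNorm_eq_eLpNorm_count (HolderConjugate.ne_zero p' p), ← lintegral_count]
  exact lintegral_mul_le_eLpNorm_mul_eLpNorm p p' (measurable_of_countable a).aemeasurable
    (measurable_of_countable b).aemeasurable

end Holder

section HerzNorm1

lemma mem_herzRing_iff {k : ℤ} {x : ℝ} : x ∈ herzRing k ↔ |x| ∈ Set.Ico (2 ^ (k - 1)) (2 ^ k) := by
  rw [herzRing, Set.mem_sdiff, Set.mem_Ioo, Set.mem_Ioo, ← abs_lt, ← abs_lt, not_lt, Set.mem_Ico,
    and_comm]

lemma measurableSet_herzRing (k : ℤ) : MeasurableSet (herzRing k) :=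
  measurableSet_Ioo.diff measurableSet_Ioo

lemma pairwise_disjoint_herzRing : Pairwise (Function.onFun Disjoint herzRing) := by
  have zpow_mono : Monotone fun k : ℤ => (2 : ℝ) ^ k := zpow_right_mono₀ one_le_two
  refine zpow_mono.pairwise_disjoint_on_Ico_pred.mono fun j k hjk => ?_
  exact Set.disjoint_left.2 fun x hj hk =>
    Set.disjoint_left.1 hjk (mem_herzRing_iff.1 hj) (mem_herzRing_iff.1 hk)

lemma iUnion_herzRing : ⋃ k, herzRing k = {0}ᶜ := by
  ext x
  simp only [Set.mem_iUnion, mem_herzRing_iff, Set.mem_compl_iff, Set.mem_singleton_iff]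
  constructor
  · rintro ⟨k, hk, -⟩
    exact abs_pos.1 (lt_of_lt_of_le (by positivity) hk)
  · intro hx
    obtain ⟨k, hk⟩ := exists_mem_Ico_zpow (abs_pos.2 hx) (one_lt_two (α := ℝ))
    exact ⟨k + 1, by simpa using hk⟩

lemma lintegral_eq_tsum_herzRing (F : ℝ → ℝ≥0∞) :
    ∫⁻ x, F x = ∑' k, ∫⁻ x in herzRing k, F x := by
  rw [← lintegral_iUnion measurableSet_herzRing pairwise_disjoint_herzRing, iUnion_herzRing,
    restrict_compl_singleton]

lemma lintegral_mul_le_herzNorm1_mul_herzNorm1 (α : ℝ) (p q p' q' : ℝ≥0∞)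
    [HolderConjugate p p'] [HolderConjugate q q'] {f g : ℝ → ℝ≥0∞}
    (hf : AEMeasurable f) (hg : AEMeasurable g) :
    ∫⁻ x, f x * g x ≤ herzNorm1 α p q f * herzNorm1 (-α) p' q' g := by
  let w : ℝ → ℤ → ℝ≥0∞ := fun α k => ENNReal.ofReal (2 ^ ((k : ℝ) * α))
  have weights_cancel (k : ℤ) : w α k * w (-α) k = 1 := by
    rw [← ENNReal.ofReal_mul (by positivity), ← Real.rpow_add two_pos]
    simp
  calc ∫⁻ x, f x * g x
      = ∑' k, ∫⁻ x in herzRing k, f x * g x := lintegral_eq_tsum_herzRing _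
    _ ≤ ∑' k, lqNormOn q (herzRing k) f * lqNormOn q' (herzRing k) g :=
        ENNReal.tsum_le_tsum fun k => lintegral_mul_le_lqNormOn_mul_lqNormOn q q'
          (measurableSet_herzRing k) hf.restrict hg.restrict
    _ = ∑' k, w α k * lqNormOn q (herzRing k) f * (w (-α) k * lqNormOn q' (herzRing k) g) :=
        tsum_congr fun k => by rw [mul_mul_mul_comm, weights_cancel, one_mul]
    _ ≤ herzNorm1 α p q f * herzNorm1 (-α) p' q' g := tsum_mul_le_lpZNorm_mul_lpZNorm p p' _ _

end HerzNorm1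

section Measurability

variable {X : Type*} [MeasurableSpace X]

lemma measurable_lqNormOn (q : ℝ≥0∞) {s : Set ℝ} (hs : MeasurableSet s) {F : X → ℝ → ℝ≥0∞}
    (hF : Measurable (Function.uncurry F)) : Measurable fun x => lqNormOn q s (F x) := by
  unfold lqNormOn
  split_ifs
  · simp only [essSup_indicator_eq_essSup_restrict hs]
    exact measurable_essSup_right _ hF
  · exact (Measurable.lintegral_prod_right (hF.pow_const _)).pow_const _

lemma measurable_lpZNorm (p : ℝ≥0∞) {a : X → ℤ → ℝ≥0∞} (ha : ∀ k, Measurable fun x => a x k) :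
    Measurable fun x => lpZNorm p (a x) := by
  unfold lpZNorm
  split_ifs
  · exact Measurable.iSup ha
  · exact (Measurable.tsum fun k => (ha k).pow_const _).pow_const _

lemma measurable_herzNorm1 (α : ℝ) (p q : ℝ≥0∞) {F : X → ℝ → ℝ≥0∞}
    (hF : Measurable (Function.uncurry F)) : Measurable fun x => herzNorm1 α p q (F x) :=
  measurable_lpZNorm p fun k => (measurable_lqNormOn q (measurableSet_herzRing k) hF).const_mul _

end Measurability

section Snoc

variable {E : Type*} [MeasurableSpace E] {n : ℕ}

lemma coe_piFinSuccAbove_last_symm :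
    ⇑(MeasurableEquiv.piFinSuccAbove (fun _ : Fin (n + 1) => E) (Fin.last n)).symm =
      fun z => Fin.snoc z.2 z.1 :=
  funext fun z => Fin.insertNth_last' z.1 z.2

lemma measurable_snoc :
    Measurable fun z : E × (Fin n → E) => (Fin.snoc z.2 z.1 : Fin (n + 1) → E) :=
  coe_piFinSuccAbove_last_symm (E := E) (n := n) ▸ MeasurableEquiv.measurable _

lemma measurePreserving_snoc (μ : Fin (n + 1) → Measure E) [∀ i, SigmaFinite (μ i)] :
    MeasurePreserving (fun z : E × (Fin n → E) => (Fin.snoc z.2 z.1 : Fin (n + 1) → E))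
      ((μ (Fin.last n)).prod (Measure.pi fun i => μ i.castSucc)) (Measure.pi μ) := by
  simpa only [coe_piFinSuccAbove_last_symm, Fin.succAbove_last] using
    (measurePreserving_piFinSuccAbove μ (Fin.last n)).symm

lemma lintegral_pi_snoc (μ : Fin (n + 1) → Measure E) [∀ i, SigmaFinite (μ i)]
    {F : (Fin (n + 1) → E) → ℝ≥0∞} (hF : Measurable F) :
    ∫⁻ x, F x ∂Measure.pi μ =
      ∫⁻ t, ∫⁻ y, F (Fin.snoc y t) ∂Measure.pi (fun i => μ i.castSucc) ∂μ (Fin.last n) := by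
  rw [← (measurePreserving_snoc μ).lintegral_comp hF]
  exact lintegral_prod _ (hF.comp measurable_snoc).aemeasurable

end Snoc

section MixedNorm

lemma measurable_mixedHerzNormE {X : Type*} [MeasurableSpace X] {n : ℕ} (α : Fin n → ℝ)
    (p q : Fin n → ℝ≥0∞) {F : X → (Fin n → ℝ) → ℝ≥0∞} (hF : Measurable (Function.uncurry F)) :
    Measurable fun x => mixedHerzNormE n α p q (F x) := by
  induction n generalizing X with
  | zero => exact hF.of_uncurry_right
  | succ n ih =>
    refine measurable_herzNorm1 _ _ _ (ih _ _ _ (X := X × ℝ)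
      (F := fun z y => F z.1 (Fin.snoc y z.2)) ?_)
    exact hF.comp (measurable_fst.fst.prodMk
      (measurable_snoc.comp (measurable_fst.snd.prodMk measurable_snd)))

lemma lintegral_mul_le_mixedHerzNormE_mul_mixedHerzNormE {n : ℕ} (α : Fin n → ℝ)
    {p q p' q' : Fin n → ℝ≥0∞} (hp : ∀ i, HolderConjugate (p i) (p' i))
    (hq : ∀ i, HolderConjugate (q i) (q' i)) {f g : (Fin n → ℝ) → ℝ≥0∞}
    (hf : Measurable f) (hg : Measurable g) :
    ∫⁻ x, f x * g x ≤ mixedHerzNormE n α p q f * mixedHerzNormE n (-α) p' q' g := by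
  induction n with
  | zero =>
    rw [volume_pi, Measure.pi_of_empty _ fun i => i.elim0, lintegral_dirac]
    rfl
  | succ n ih =>
    have := hp (Fin.last n)
    have := hq (Fin.last n)
    have hf_snoc : Measurable (Function.uncurry fun (t : ℝ) (y : Fin n → ℝ) => f (Fin.snoc y t)) :=
      hf.comp measurable_snoc
    have hg_snoc : Measurable (Function.uncurry fun (t : ℝ) (y : Fin n → ℝ) => g (Fin.snoc y t)) :=
      hg.comp measurable_snoc
    let N (t : ℝ) : ℝ≥0∞ :=
      mixedHerzNormE n (Fin.init α) (Fin.init p) (Fin.init q) fun y => f (Fin.snoc y t)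
    let N' (t : ℝ) : ℝ≥0∞ :=
      mixedHerzNormE n (-Fin.init α) (Fin.init p') (Fin.init q') fun y => g (Fin.snoc y t)
    calc ∫⁻ x, f x * g x
        = ∫⁻ t, ∫⁻ y : Fin n → ℝ, f (Fin.snoc y t) * g (Fin.snoc y t) :=
          lintegral_pi_snoc (fun _ => volume) (hf.mul hg)
      _ ≤ ∫⁻ t, N t * N' t := lintegral_mono fun t =>
          ih (Fin.init α) (fun i => hp i.castSucc) (fun i => hq i.castSucc)
            hf_snoc.of_uncurry_left hg_snoc.of_uncurry_left
      _ ≤ mixedHerzNormE (n + 1) α p q f * mixedHerzNormE (n + 1) (-α) p' q' g :=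
          lintegral_mul_le_herzNorm1_mul_herzNorm1 _ _ _ _ _
            (measurable_mixedHerzNormE _ _ _ hf_snoc).aemeasurable
            (measurable_mixedHerzNormE _ _ _ hg_snoc).aemeasurable

end MixedNorm

/-- Hölder inequality for mixed-norm Herz spaces. -/
theorem mixedHerz_holder (n : ℕ) (α : Fin n → ℝ) (p q p' q' : Fin n → ℝ≥0∞)
    (hp : ∀ i, 1 ≤ p i) (hq : ∀ i, 1 ≤ q i)
    (hp' : ∀ i, 1 / p i + 1 / p' i = 1) (hq' : ∀ i, 1 / q i + 1 / q' i = 1)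
    (f g : (Fin n → ℝ) → ℂ) (hf : Measurable f) (hg : Measurable g) :
    (∫⁻ x, (‖f x * g x‖₊ : ℝ≥0∞)) ≤
      herzNormC n α p q f * herzNormC n (-α) p' q' g := by
  have hpp' (i : Fin n) : HolderConjugate (p i) (p' i) :=
    holderConjugate_iff.2 (by simpa only [one_div] using hp' i)
  have hqq' (i : Fin n) : HolderConjugate (q i) (q' i) :=
    holderConjugate_iff.2 (by simpa only [one_div] using hq' i)
  simpa only [herzNormC, nnnorm_mul, ENNReal.coe_mul] using
    lintegral_mul_le_mixedHerzNormE_mul_mixedHerzNormE α hpp' hqq'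
      hf.nnnorm.coe_nnreal_ennreal hg.nnnorm.coe_nnreal_ennreal
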